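/- Let S be a finite set, ν a probability measure on S with ν({η}) > 0 for all η ∈ S, and c : S × S → [0,∞) with c(η,η) = 0 for all η. Define the Markov generator (Lf)(η) := Σ_{η'∈S} c(η,η')(f(η') − f(η)). Let Ψ : S → (0,∞), let f : S → (0,∞) be a probability density with respect to ν, and set h := f/Ψ. Then Σ_η ν({η}) f(η) (L log h)(η) ≤ − Σ_{η,η'} ν({η}) Ψ(η) c(η,η') (√(h(η')) − √(h(η)))² + Σ_η ν({η}) Ψ(η) (Lh)(η). -/

import Mathlib

open Finset

/-!
Writing `h = f / Ψ` turns `ν f` into `(ν Ψ) h`, so the claim is the average, against the nonnegative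
weight `ν Ψ`, of an inequality at each state. That inequality in turn is a sum over single jumps:
with `a = h η'` and `b = h η`, the bound `log t ≤ t - 1` at `t = √a / √b` gives
`b (log a - log b) ≤ 2 √b (√a - √b) = -(√a - √b) ^ 2 + (a - b)`.
-/

section JumpGenerator

variable {S : Type*} [Fintype S]

/-- The generator `L` of the Markov jump process on `S` with rates `c`, acting on functions. -/
def jumpGenerator (c : S → S → ℝ) (g : S → ℝ) (η : S) : ℝ :=
  ∑ η', c η η' * (g η' - g η)

/-- The carré du champ of the jump process with rates `c`, on the diagonal, normalized as
`L (g ^ 2) - 2 g L g` (without the customary factor `1 / 2`). Its average against a weight is the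
Dirichlet-form term of the entropy-production bound. -/
def carreDuChamp (c : S → S → ℝ) (g : S → ℝ) (η : S) : ℝ :=
  ∑ η', c η η' * (g η' - g η) ^ 2

lemma log_sub_log_le_two_mul_sqrt_div_sqrt_sub_one {a b : ℝ} (ha : 0 < a) (hb : 0 < b) :
    Real.log a - Real.log b ≤ 2 * (√a / √b - 1) := by
  calc Real.log a - Real.log b = 2 * Real.log (√a / √b) := by
        rw [Real.log_div (Real.sqrt_ne_zero'.2 ha) (Real.sqrt_ne_zero'.2 hb),
          Real.log_sqrt ha.le, Real.log_sqrt hb.le]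
        ring
    _ ≤ 2 * (√a / √b - 1) := by
        gcongr
        exact Real.log_le_sub_one_of_pos (by positivity)

lemma mul_log_sub_log_le_neg_sq_sqrt_sub_sqrt_add_sub {a b : ℝ} (ha : 0 < a) (hb : 0 < b) :
    b * (Real.log a - Real.log b) ≤ -(√a - √b) ^ 2 + (a - b) := by
  calc b * (Real.log a - Real.log b) ≤ b * (2 * (√a / √b - 1)) := by
        gcongr
        exact log_sub_log_le_two_mul_sqrt_div_sqrt_sub_one ha hb
    _ = 2 * (√a * (b / √b) - b) := by ring
    _ = 2 * (√a * √b - b) := by rw [Real.div_sqrt]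
    _ = -(√a - √b) ^ 2 + (a - b) := by
        rw [sub_sq, Real.sq_sqrt ha.le, Real.sq_sqrt hb.le]
        ring

lemma mul_jumpGenerator_log_le {c : S → S → ℝ} (hc : ∀ η η', 0 ≤ c η η')
    {h : S → ℝ} (hh : ∀ η, 0 < h η) (η : S) :
    h η * jumpGenerator c (fun ξ => Real.log (h ξ)) η ≤
      -carreDuChamp c (fun ξ => √(h ξ)) η + jumpGenerator c h η := by
  unfold jumpGenerator carreDuChamp
  rw [mul_sum, ← sum_neg_distrib, ← sum_add_distrib]
  refine sum_le_sum fun η' _ => ?_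
  calc h η * (c η η' * (Real.log (h η') - Real.log (h η)))
      = c η η' * (h η * (Real.log (h η') - Real.log (h η))) := mul_left_comm ..
    _ ≤ c η η' * (-(√(h η') - √(h η)) ^ 2 + (h η' - h η)) :=
        mul_le_mul_of_nonneg_left
          (mul_log_sub_log_le_neg_sq_sqrt_sub_sqrt_add_sub (hh η') (hh η)) (hc η η')
    _ = -(c η η' * (√(h η') - √(h η)) ^ 2) + c η η' * (h η' - h η) := by ring

theorem entropy_production_bound_general {m : S → ℝ} (hm : ∀ η, 0 ≤ m η)
    {c : S → S → ℝ} (hc : ∀ η η', 0 ≤ c η η') {h : S → ℝ} (hh : ∀ η, 0 < h η) :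
    ∑ η, m η * h η * jumpGenerator c (fun ξ => Real.log (h ξ)) η ≤
      -∑ η, m η * carreDuChamp c (fun ξ => √(h ξ)) η + ∑ η, m η * jumpGenerator c h η := by
  rw [← sum_neg_distrib, ← sum_add_distrib]
  refine sum_le_sum fun η _ => ?_
  rw [mul_assoc, ← mul_neg, ← mul_add]
  exact mul_le_mul_of_nonneg_left (mul_jumpGenerator_log_le hc hh η) (hm η)

end JumpGenerator

/-- Entropy-production bound for a Markov generator on a finite state space `S`:
with `ν` a (positive) probability measure, jump rates `c ≥ 0` with `c η η = 0`,
`(Lf)(η) = Σ_{η'} c(η,η')(f(η') - f(η))`, `Ψ > 0`, `f > 0` a probability density with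
respect to `ν`, and `h = f/Ψ`, one has
`Σ ν f (L log h) ≤ - Σ ν Ψ c (√h' - √h)² + Σ ν Ψ (Lh)`. -/
theorem entropy_production_bound {S : Type*} [Fintype S]
    (ν : S → ℝ) (hν : ∀ η, 0 < ν η) (hν1 : ∑ η, ν η = 1)
    (c : S → S → ℝ) (hc : ∀ η η', 0 ≤ c η η') (hcd : ∀ η, c η η = 0)
    (Ψ : S → ℝ) (hΨ : ∀ η, 0 < Ψ η)
    (f : S → ℝ) (hf : ∀ η, 0 < f η) (hf1 : ∑ η, ν η * f η = 1) :
    ∑ η, ν η * f η *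
        (∑ η', c η η' * (Real.log (f η' / Ψ η') - Real.log (f η / Ψ η)))
      ≤ -∑ η, ∑ η', ν η * Ψ η * c η η' *
            (Real.sqrt (f η' / Ψ η') - Real.sqrt (f η / Ψ η)) ^ 2
        + ∑ η, ν η * Ψ η * (∑ η', c η η' * (f η' / Ψ η' - f η / Ψ η)) := by
  have hmass (η : S) : ν η * Ψ η * (f η / Ψ η) = ν η * f η := by
    rw [mul_assoc, mul_div_cancel₀ _ (hΨ η).ne']
  simpa only [jumpGenerator, carreDuChamp, hmass, mul_sum, ← mul_assoc] using
    entropy_production_bound_general (fun η => (mul_pos (hν η) (hΨ η)).le) hc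
      (fun η => div_pos (hf η) (hΨ η))
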